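/- For every nonnegative integer n, the gauge Hamiltonian \bar H_2 = 4 T_2 + 4(1−2a) J^0 + 2Na², where T_2 = Σ_{i=1}^N z_i² ∂_i² + 2a Σ_{i=1}^N (z_i − z_{i+1})^{-1}(z_i² ∂_i − z_{i+1}² ∂_{i+1}) − 2a Σ_{i=1}^N z_i z_{i+1} (z_i − z_{i+1})^{-2}(1 − K_{i,i+1}) and J^0 = Σ_i z_i ∂_i, leaves invariant the space 𝒯_2^n spanned by all elements of the form f(σ_1,τ_{N−1},τ_N) Λ|s⟩, g(τ_{N−1},τ_N) Λ(z_1|s⟩), and q(σ_1,τ_N) Λ(z_2 z_3⋯z_N |s⟩), where |s⟩ ranges over Σ, f is a polynomial in σ_1, τ_{N−1}, τ_N of degree at most 1 in σ_1 and at most 1 in τ_{N−1} with total z-degree at most n, g is a polynomial in τ_{N−1}, τ_N of degree at most 1 in τ_{N−1} with total z-degree at most n−1, and q is a polynomial in σ_1, τ_N of degree at most 1 in σ_1 with total z-degree at most n−N+1. (K_{i,i+1} exchanges the variables z_i and z_{i+1}, acting trivially on the spin component; the assertion includes the claim that \bar H_2 applied to such an element, computed in the field of rational functions, is again a Σ-valued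 polynomial in 𝒯_2^n.) -/

import Mathlib

noncomputable section

open MvPolynomial

/-- Polynomials in `N` variables over `ℂ`. -/
abbrev MvP (N : ℕ) : Type := MvPolynomial (Fin N) ℂ

/-- The spin space `Σ`: complex functions on `Fin N → Fin d`. -/
abbrev SpinV (N d : ℕ) : Type := (Fin N → Fin d) → ℂ

/-- `Σ`-valued polynomials. -/
abbrev SpinPoly (N d : ℕ) : Type := (Fin N → Fin d) → MvP N

/-- The canonical embedding of polynomials into the field of rational functions. -/
noncomputable def phi (N : ℕ) : MvP N →+* FractionRing (MvP N) :=
  algebraMap (MvP N) (FractionRing (MvP N))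

/-- The power sum `σ_k = ∑ i, z_i ^ k`. -/
def sig (N k : ℕ) : MvP N := ∑ i : Fin N, X i ^ k

/-- The top elementary symmetric polynomial `τ_N = ∏ i, z_i`. -/
def tauTop (N : ℕ) : MvP N := ∏ i : Fin N, X i

/-- The elementary symmetric polynomial `τ_{N-1} = ∑ i, ∏_{j ≠ i} z_j`. -/
def tauSub (N : ℕ) : MvP N := ∑ i : Fin N, ∏ j ∈ Finset.univ.erase i, X j

/-- The action of a permutation `π ∈ S_N` on the spin space, permuting the `N` spin slots. -/
def spinPerm {N d : ℕ} (π : Equiv.Perm (Fin N)) (v : SpinV N d) : SpinV N d :=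
  fun c => v (c ∘ π)

/-- The spin vector `|s_i⟩ = (1/N!) ∑_{π ∈ S_N, π(1) = i} π |s⟩`. -/
noncomputable def sComp {N d : ℕ} [NeZero N] (s : SpinV N d) (i : Fin N) : SpinV N d :=
  (N.factorial : ℂ)⁻¹ •
    ∑ π ∈ Finset.univ.filter (fun π : Equiv.Perm (Fin N) => π 0 = i), spinPerm π s

/-- The symmetrization `Λ|s⟩ = ∑ i, |s_i⟩`. -/
noncomputable def Lam {N d : ℕ} [NeZero N] (s : SpinV N d) : SpinV N d :=
  ∑ i : Fin N, sComp s i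

/-- The operator
`T_2 = ∑ i z_i² ∂_i² + 2a ∑ i (z_i - z_{i+1})⁻¹ (z_i² ∂_i - z_{i+1}² ∂_{i+1})
  - 2a ∑ i z_i z_{i+1} (z_i - z_{i+1})⁻² (1 - K_{i,i+1})`
(indices cyclic, `K_{i,i+1}` exchanging the variables `z_i` and `z_{i+1}`),
computed in the field of rational functions. -/
noncomputable def T2op (N : ℕ) [NeZero N] (a : ℝ) (f : MvP N) : FractionRing (MvP N) :=
  (∑ i : Fin N, phi N (X i ^ 2 * pderiv i (pderiv i f)))
  + phi N (C ((2 * a : ℝ) : ℂ)) *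
      ∑ i : Fin N, (phi N (X i - X (i + 1)))⁻¹ *
        phi N (X i ^ 2 * pderiv i f - X (i + 1) ^ 2 * pderiv (i + 1) f)
  - phi N (C ((2 * a : ℝ) : ℂ)) *
      ∑ i : Fin N, phi N (X i * X (i + 1)) * ((phi N (X i - X (i + 1)))⁻¹) ^ 2 *
        phi N (f - rename (Equiv.swap i (i + 1)) f)

/-- The gauge Hamiltonian `H̄_2 = 4 T_2 + 4(1 - 2a) J⁰ + 2Na²`, acting componentwise on
`Σ`-valued polynomials and computed in the field of rational functions. -/
noncomputable def Hbar2op (N : ℕ) [NeZero N] (a : ℝ) (f : MvP N) : FractionRing (MvP N) :=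
  phi N (C ((4 : ℝ) : ℂ)) * T2op N a f
  + phi N (C ((4 * (1 - 2 * a) : ℝ) : ℂ)) * ∑ i : Fin N, phi N (X i * pderiv i f)
  + phi N (C ((2 * N * a ^ 2 : ℝ) : ℂ)) * phi N f

/-- Generators of type `f(σ_1, τ_{N-1}, τ_N) Λ|s⟩`, where `f` has degree at most `1` in `σ_1`
and in `τ_{N-1}`, and total `z`-degree at most `n`. -/
def T2genF (N d n : ℕ) [NeZero N] : Set (SpinPoly N d) :=
  {Φ | ∃ (s : SpinV N d) (F : MvPolynomial (Fin 3) ℂ),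
    F.degreeOf 0 ≤ 1 ∧ F.degreeOf 1 ≤ 1 ∧
    (aeval ![sig N 1, tauSub N, tauTop N] F : MvP N).totalDegree ≤ n ∧
    Φ = fun c => C (Lam s c) * aeval ![sig N 1, tauSub N, tauTop N] F}

/-- Generators of type `g(τ_{N-1}, τ_N) Λ(z_1 |s⟩)`, where `g` has degree at most `1` in
`τ_{N-1}` and total `z`-degree at most `n - 1`. -/
def T2genG (N d n : ℕ) [NeZero N] : Set (SpinPoly N d) :=
  {Φ | ∃ (s : SpinV N d) (G : MvPolynomial (Fin 2) ℂ),
    G.degreeOf 0 ≤ 1 ∧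
    (aeval ![tauSub N, tauTop N] G : MvP N).totalDegree + 1 ≤ n ∧
    Φ = fun c => ∑ i : Fin N, C (sComp s i c) * (X i * aeval ![tauSub N, tauTop N] G)}

/-- Generators of type `q(σ_1, τ_N) Λ(z_2 ⋯ z_N |s⟩)`, where `q` has degree at most `1` in
`σ_1` and total `z`-degree at most `n - N + 1`. -/
def T2genQ (N d n : ℕ) [NeZero N] : Set (SpinPoly N d) :=
  {Φ | ∃ (s : SpinV N d) (Q : MvPolynomial (Fin 2) ℂ),
    Q.degreeOf 0 ≤ 1 ∧
    (aeval ![sig N 1, tauTop N] Q : MvP N).totalDegree + (N - 1) ≤ n ∧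
    Φ = fun c => ∑ i : Fin N,
      C (sComp s i c) * ((∏ j ∈ Finset.univ.erase i, X j) * aeval ![sig N 1, tauTop N] Q)}

/-- The space `𝒯_2^n`. -/
noncomputable def T2space (N d n : ℕ) [NeZero N] : Submodule ℂ (SpinPoly N d) :=
  Submodule.span ℂ (T2genF N d n ∪ T2genG N d n ∪ T2genQ N d n)

/-!
For a symmetric factor `p` the exchange part of `T_2` is inert, so that
`T_2 (p f) = p T_2 f + (T_2 p) f + 2 Γ(p, f)` with the carré du champ
`Γ(p, f) = ∑ i, (z_i ∂_i p) (z_i ∂_i f)`. Euler's identity makes `Γ(τ_N ^ k, f)` a multiple of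
`τ_N ^ k f` when `f` is homogeneous, so multiplication by `τ_N ^ k` only changes eigenvalues.
What is left is a finite check: writing `w_i = ∏_{j ≠ i} z_j`, the polynomials `1`, `σ_1`,
`τ_{N-1}`, `z_i` and `w_i` are eigenvectors of `T_2`, while `σ_1 τ_{N-1}`, `τ_{N-1} z_i` and
`σ_1 w_i` are so up to a multiple of `τ_N`, the correction coming from `z_i w_i = τ_N`. Summed
against the spin vectors `|s_i⟩`, that multiple becomes one of `τ_N ^ (k + 1) Λ|s⟩`, which has the
same degree and hence lies in `𝒯_2^n`.
-/

section EulerDeriv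

variable {ι R : Type*}

/-- The Euler operator `z_i ∂_i`. -/
def eulerDeriv [CommSemiring R] (i : ι) : Derivation R (MvPolynomial ι R) (MvPolynomial ι R) :=
  (X i : MvPolynomial ι R) • pderiv i

lemma eulerDeriv_apply [CommSemiring R] (i : ι) (f : MvPolynomial ι R) :
    eulerDeriv i f = X i * pderiv i f := rfl

lemma X_sq_mul_pderiv_pderiv [CommRing R] (i : ι) (f : MvPolynomial ι R) :
    X i ^ 2 * pderiv i (pderiv i f) = eulerDeriv i (eulerDeriv i f) - eulerDeriv i f := by
  simp only [eulerDeriv_apply, Derivation.leibniz, smul_eq_mul, pderiv_X_self]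
  ring

variable [CommSemiring R]

lemma eulerDeriv_X [DecidableEq ι] (i j : ι) :
    eulerDeriv i (X j : MvPolynomial ι R) = if i = j then X j else 0 := by
  rw [eulerDeriv_apply, pderiv_X]
  rcases eq_or_ne i j with rfl | h <;> simp [*]

lemma eulerDeriv_prod_X [DecidableEq ι] (i : ι) (s : Finset ι) :
    eulerDeriv i (∏ j ∈ s, X j : MvPolynomial ι R) = if i ∈ s then ∏ j ∈ s, X j else 0 := by
  induction s using Finset.induction_on with
  | empty => simp
  | insert b s hb ih =>
    rw [Finset.prod_insert hb, Derivation.leibniz, ih, eulerDeriv_X]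
    rcases eq_or_ne i b with rfl | h <;> simp [*, mul_comm]

lemma X_sq_mul_pderiv_pderiv_prod_X {R : Type*} [CommRing R] (i : ι) (s : Finset ι) :
    X i ^ 2 * pderiv i (pderiv i (∏ j ∈ s, X j : MvPolynomial ι R)) = 0 := by
  classical
  rw [X_sq_mul_pderiv_pderiv, eulerDeriv_prod_X]
  split_ifs with h <;> simp [eulerDeriv_prod_X, h]

/-- The carré du champ `Γ(f, g) = ∑ i, (z_i ∂_i f) (z_i ∂_i g)` of `∑ i, z_i² ∂_i²`, i.e. half the
defect in its product rule. -/
def carreDuChamp [Fintype ι] (f g : MvPolynomial ι R) : MvPolynomial ι R :=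
  ∑ i, eulerDeriv i f * eulerDeriv i g

end EulerDeriv

section Homogeneous

variable {ι R : Type*} [CommSemiring R]

lemma isHomogeneous_prod_X (s : Finset ι) :
    (∏ j ∈ s, X j : MvPolynomial ι R).IsHomogeneous s.card := by
  simpa using IsHomogeneous.prod s (fun j => (X j : MvPolynomial ι R)) (fun _ => 1)
    fun j _ => isHomogeneous_X R j

variable {κ : Type*} [Fintype κ] {v : κ → MvPolynomial ι R} {w : κ → ℕ}

lemma isHomogeneous_prod_pow (hv : ∀ j, (v j).IsHomogeneous (w j)) (e : κ → ℕ) :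
    (∏ j, v j ^ e j).IsHomogeneous (∑ j, w j * e j) :=
  IsHomogeneous.prod _ _ _ fun j _ => (hv j).pow _

-- The `v j` need not be algebraically independent, so the degree bound on `aeval v F` does not
-- bound the weights of the monomials of `F`; those that are too heavy cancel and are discarded.
lemma aeval_mem_of_totalDegree_le (hv : ∀ j, (v j).IsHomogeneous (w j)) {F : MvPolynomial κ R}
    {n : ℕ} (hF : (aeval v F).totalDegree ≤ n) {W : Submodule R (MvPolynomial ι R)}
    (hW : ∀ e : κ → ℕ, (∀ j, e j ≤ F.degreeOf j) → ∑ j, w j * e j ≤ n → ∏ j, v j ^ e j ∈ W) :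
    aeval v F ∈ W := by
  have expand : aeval v F = ∑ m ∈ F.support, F.coeff m • ∏ j, v j ^ m j := by
    rw [aeval_def, eval₂_eq']
    simp only [Algebra.smul_def]
  rw [← sum_homogeneousComponent (aeval v F)]
  refine W.sum_mem fun k hk => ?_
  rw [expand, map_sum]
  refine W.sum_mem fun m hm => ?_
  rw [map_smul, homogeneousComponent_of_mem (isHomogeneous_prod_pow hv m)]
  split_ifs with hkm
  · refine W.smul_mem _ (hW m (fun j => monomial_le_degreeOf j hm) ?_)
    exact hkm ▸ (Nat.lt_succ_iff.mp (Finset.mem_range.mp hk)).trans hF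
  · simp

lemma exists_aeval_eq_prod_pow (hv : ∀ j, (v j).IsHomogeneous (w j)) (e : κ → ℕ) :
    ∃ F : MvPolynomial κ R, aeval v F = ∏ j, v j ^ e j ∧ (∀ j, F.degreeOf j ≤ e j) ∧
      (aeval v F).totalDegree ≤ ∑ j, w j * e j := by
  have hF : aeval v (monomial (Finsupp.equivFunOnFinite.symm e) (1 : R)) = ∏ j, v j ^ e j := by
    rw [aeval_monomial, Finsupp.prod_fintype _ _ (by simp)]
    simp
  refine ⟨_, hF, fun j => ?_, hF ▸ (isHomogeneous_prod_pow hv e).totalDegree_le⟩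
  exact degreeOf_le_iff.mpr fun m hm => by
    rw [Finset.mem_singleton.mp (support_monomial_subset hm)]; rfl

end Homogeneous

section Symmetric

variable {N : ℕ}

/-- The product `∏_{j ≠ i} z_j` of all variables but one. -/
def tauErase (i : Fin N) : MvP N := ∏ j ∈ Finset.univ.erase i, X j

lemma sig_one_eq_sum : sig N 1 = ∑ i, X i := by simp [sig]

lemma X_mul_tauErase (i : Fin N) : X i * tauErase i = tauTop N :=
  Finset.mul_prod_erase _ _ (Finset.mem_univ i)

lemma isHomogeneous_sig_one : (sig N 1).IsHomogeneous 1 := by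
  rw [sig_one_eq_sum]
  exact IsHomogeneous.sum _ _ _ fun i _ => isHomogeneous_X ℂ i

lemma isHomogeneous_tauErase (i : Fin N) : (tauErase i).IsHomogeneous (N - 1) := by
  simpa [tauErase, Finset.card_erase_of_mem] using
    isHomogeneous_prod_X (R := ℂ) (Finset.univ.erase i)

lemma isHomogeneous_tauSub : (tauSub N).IsHomogeneous (N - 1) :=
  IsHomogeneous.sum _ _ _ fun i _ => isHomogeneous_tauErase i

lemma isHomogeneous_tauTop : (tauTop N).IsHomogeneous N := by
  simpa [tauTop] using isHomogeneous_prod_X (R := ℂ) (Finset.univ : Finset (Fin N))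

lemma isSymmetric_sig (k : ℕ) : (sig N k).IsSymmetric := psum_isSymmetric (Fin N) ℂ k

lemma isSymmetric_tauTop : (tauTop N).IsSymmetric := fun e => by
  simpa [tauTop] using Equiv.prod_comp e fun i => (X i : MvP N)

lemma isSymmetric_tauTop_pow (k : ℕ) : (tauTop N ^ k).IsSymmetric := fun e => by
  rw [map_pow, isSymmetric_tauTop]

lemma rename_tauErase (e : Equiv.Perm (Fin N)) (i : Fin N) :
    rename e (tauErase i) = tauErase (e i) := by
  refine mul_left_cancel₀ (X_ne_zero (e i)) ?_
  rw [X_mul_tauErase, ← isSymmetric_tauTop e, ← X_mul_tauErase i, map_mul, rename_X]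

lemma isSymmetric_tauSub : (tauSub N).IsSymmetric := fun e => by
  change rename e (∑ i, tauErase i) = ∑ i, tauErase i
  simpa [rename_tauErase] using Equiv.sum_comp e (tauErase (N := N))

lemma eulerDeriv_sig_one (i : Fin N) : eulerDeriv i (sig N 1) = X i := by
  simp [sig_one_eq_sum, eulerDeriv_X]

lemma eulerDeriv_tauErase (i j : Fin N) :
    eulerDeriv i (tauErase j) = if i = j then 0 else tauErase j := by
  simp [tauErase, eulerDeriv_prod_X]

lemma eulerDeriv_tauSub (i : Fin N) : eulerDeriv i (tauSub N) = tauSub N - tauErase i := by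
  change eulerDeriv i (∑ j, tauErase j) = (∑ j, tauErase j) - tauErase i
  simp [eulerDeriv_tauErase, Finset.sum_ite, ← Finset.sum_erase_eq_sub, Finset.filter_ne]

lemma eulerDeriv_tauTop (i : Fin N) : eulerDeriv i (tauTop N) = tauTop N := by
  simp [tauTop, eulerDeriv_prod_X]

lemma eulerDeriv_tauTop_pow (i : Fin N) (k : ℕ) :
    eulerDeriv i (tauTop N ^ k) = k * tauTop N ^ k := by
  cases k with
  | zero => simp
  | succ k => rw [Derivation.leibniz_pow, eulerDeriv_tauTop, Nat.add_sub_cancel, smul_eq_mul,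
      ← pow_succ, nsmul_eq_mul]

lemma carreDuChamp_tauSub_X (i : Fin N) :
    carreDuChamp (tauSub N) (X i) = tauSub N * X i - tauTop N := by
  simp [carreDuChamp, eulerDeriv_X, eulerDeriv_tauSub, sub_mul, ← X_mul_tauErase i, mul_comm]

lemma carreDuChamp_sig_one_tauErase (i : Fin N) :
    carreDuChamp (sig N 1) (tauErase i) = sig N 1 * tauErase i - tauTop N := by
  simp only [carreDuChamp, eulerDeriv_sig_one, eulerDeriv_tauErase, mul_ite, mul_zero]
  rw [← X_mul_tauErase i, ← sub_mul, sig_one_eq_sum, ← Finset.sum_erase_eq_sub (Finset.mem_univ i),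
    Finset.sum_mul]
  simp [Finset.sum_ite, Finset.filter_ne']

lemma carreDuChamp_tauTop_pow {f : MvP N} {m : ℕ} (hf : f.IsHomogeneous m) (k : ℕ) :
    carreDuChamp (tauTop N ^ k) f = k * m * (tauTop N ^ k * f) := by
  simp only [carreDuChamp, eulerDeriv_tauTop_pow, ← Finset.mul_sum]
  simp only [eulerDeriv_apply, hf.sum_X_mul_pderiv, nsmul_eq_mul]
  ring

end Symmetric

section TwoBody

variable {N : ℕ}

/-- The summand of the interaction part of `T_2` for the particles `i` and `j`, namely
`(z_i - z_j)⁻¹ (z_i² ∂_i f - z_j² ∂_j f) - z_i z_j (z_i - z_j)⁻² (f - K_{ij} f)`. -/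
def pairTerm (i j : Fin N) (f : MvP N) : FractionRing (MvP N) :=
  (phi N (X i - X j))⁻¹ * phi N (X i ^ 2 * pderiv i f - X j ^ 2 * pderiv j f)
    - phi N (X i * X j) * ((phi N (X i - X j))⁻¹) ^ 2 * phi N (f - rename (Equiv.swap i j) f)

lemma T2op_eq_add_sum_pairTerm [NeZero N] (a : ℝ) (f : MvP N) :
    T2op N a f = phi N (∑ i, X i ^ 2 * pderiv i (pderiv i f))
      + phi N (C ((2 * a : ℝ) : ℂ)) * ∑ i, pairTerm i (i + 1) f := by
  simp only [T2op, pairTerm, Finset.sum_sub_distrib, map_sum]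
  ring

lemma pairTerm_symm_mul {p : MvP N} (hp : p.IsSymmetric) (i j : Fin N) (f : MvP N) :
    pairTerm i j (p * f) = phi N p * pairTerm i j f + pairTerm i j p * phi N f := by
  simp only [pairTerm, map_mul, hp _, Derivation.leibniz, smul_eq_mul, map_sub, map_add]
  ring

lemma pairTerm_eq_phi {i j : Fin N} (hij : i ≠ j) {f e : MvP N}
    (h : (X i - X j) * (X i * eulerDeriv i f - X j * eulerDeriv j f)
      - X i * X j * (f - rename (Equiv.swap i j) f) = (X i - X j) ^ 2 * e) :
    pairTerm i j f = phi N e := by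
  have hne : phi N (X i - X j) ≠ 0 := by
    rw [phi, Ne, FaithfulSMul.algebraMap_eq_zero_iff, sub_eq_zero]
    exact fun h => hij (X_injective h)
  have clear_denominators := congrArg (phi N) h
  simp only [eulerDeriv_apply, ← mul_assoc, ← sq] at clear_denominators
  rw [map_sub, map_mul, map_mul _ (_ * _), map_mul _ (_ ^ 2), map_pow] at clear_denominators
  rw [pairTerm]
  field_simp
  linear_combination clear_denominators

lemma pairTerm_X {i j : Fin N} (hij : i ≠ j) (m : Fin N) :
    pairTerm i j (X m) = phi N ((if i = m then X m else 0) + if j = m then X m else 0) := by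
  refine pairTerm_eq_phi hij ?_
  rw [eulerDeriv_X, eulerDeriv_X, rename_X]
  by_cases him : i = m
  · subst him
    simp only [if_true, if_neg hij.symm, Equiv.swap_apply_left]
    ring
  by_cases hjm : j = m
  · subst hjm
    simp only [if_true, if_neg hij, Equiv.swap_apply_right]
    ring
  rw [Equiv.swap_apply_of_ne_of_ne (Ne.symm him) (Ne.symm hjm)]
  simp [him, hjm]

lemma pairTerm_tauErase {i j : Fin N} (hij : i ≠ j) (m : Fin N) :
    pairTerm i j (tauErase m) = phi N (tauErase m) := by
  refine pairTerm_eq_phi hij ?_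
  have hw : (X i : MvP N) * tauErase i = X j * tauErase j := by
    rw [X_mul_tauErase, X_mul_tauErase]
  rw [eulerDeriv_tauErase, eulerDeriv_tauErase, rename_tauErase]
  by_cases him : i = m
  · subst him
    simp only [if_true, if_neg hij.symm, Equiv.swap_apply_left]
    linear_combination -X i * hw
  by_cases hjm : j = m
  · subst hjm
    simp only [if_true, if_neg hij, Equiv.swap_apply_right]
    linear_combination X j * hw
  rw [Equiv.swap_apply_of_ne_of_ne (Ne.symm him) (Ne.symm hjm), if_neg him, if_neg hjm]
  ring

lemma pairTerm_tauTop {i j : Fin N} (hij : i ≠ j) :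
    pairTerm i j (tauTop N) = phi N (tauTop N) := by
  refine pairTerm_eq_phi hij ?_
  rw [eulerDeriv_tauTop, eulerDeriv_tauTop, isSymmetric_tauTop]
  ring

end TwoBody

section T2

variable {N : ℕ}

/-- `phi` as a `ℂ`-linear map. -/
def phiLin (N : ℕ) : MvP N →ₗ[ℂ] FractionRing (MvP N) :=
  (IsScalarTower.toAlgHom ℂ (MvP N) (FractionRing (MvP N))).toLinearMap

lemma phi_smul (r : ℂ) (f : MvP N) : phi N (r • f) = r • phi N f :=
  (phiLin N).map_smul r f

lemma phi_C (r : ℂ) : phi N (C r) = algebraMap ℂ (FractionRing (MvP N)) r :=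
  (IsScalarTower.algebraMap_apply ℂ (MvP N) _ r).symm

lemma ne_add_one_of_two_le [NeZero N] (hN : 2 ≤ N) (i : Fin N) : i ≠ i + 1 := by
  simpa using (show N ≠ 1 by omega)

variable [NeZero N]

/-- `T_2` as a `ℂ`-linear map into the rational functions. -/
def T2Lin (N : ℕ) [NeZero N] (a : ℝ) : MvP N →ₗ[ℂ] FractionRing (MvP N) where
  toFun := T2op N a
  map_add' f g := by
    simp only [T2op, map_add, map_sub, mul_add, Finset.sum_add_distrib, mul_sub,
      Finset.sum_sub_distrib]
    ring
  map_smul' r f := by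
    simp only [T2op, Derivation.map_smul, map_smul, mul_smul_comm, phi_smul, ← smul_sub,
      ← Finset.smul_sum, ← smul_add, RingHom.id_apply]

/-- `H̄_2` as a `ℂ`-linear map into the rational functions. -/
def Hbar2Lin (N : ℕ) [NeZero N] (a : ℝ) : MvP N →ₗ[ℂ] FractionRing (MvP N) where
  toFun := Hbar2op N a
  map_add' f g := by
    have hT : T2op N a (f + g) = T2op N a f + T2op N a g := (T2Lin N a).map_add f g
    simp only [Hbar2op, hT, map_add, mul_add, Finset.sum_add_distrib]
    ring
  map_smul' r f := by
    have hT : T2op N a (r • f) = r • T2op N a f := (T2Lin N a).map_smul r f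
    simp only [Hbar2op, hT, Derivation.map_smul, mul_smul_comm, phi_smul, ← Finset.smul_sum,
      ← smul_add, RingHom.id_apply]

lemma T2op_sum (a : ℝ) {ι : Type*} (s : Finset ι) (f : ι → MvP N) :
    T2op N a (∑ i ∈ s, f i) = ∑ i ∈ s, T2op N a (f i) :=
  map_sum (T2Lin N a) f s

lemma T2op_symm_mul (a : ℝ) {p : MvP N} (hp : p.IsSymmetric) (f : MvP N) :
    T2op N a (p * f) = phi N p * T2op N a f + T2op N a p * phi N f
      + 2 * phi N (carreDuChamp p f) := by
  have laplacian_mul : ∑ i, X i ^ 2 * pderiv i (pderiv i (p * f))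
      = p * (∑ i, X i ^ 2 * pderiv i (pderiv i f)) + (∑ i, X i ^ 2 * pderiv i (pderiv i p)) * f
        + 2 * carreDuChamp p f := by
    simp only [carreDuChamp, Finset.mul_sum, Finset.sum_mul, ← Finset.sum_add_distrib]
    refine Finset.sum_congr rfl fun i _ => ?_
    simp only [eulerDeriv_apply, Derivation.leibniz, smul_eq_mul, map_add]
    ring
  simp only [T2op_eq_add_sum_pairTerm, laplacian_mul, pairTerm_symm_mul hp, map_add, map_mul,
    Finset.sum_add_distrib, ← Finset.mul_sum, ← Finset.sum_mul, map_ofNat]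
  ring

lemma T2op_prod_X (a : ℝ) (s : Finset (Fin N)) :
    T2op N a (∏ j ∈ s, X j) = (2 * a : ℂ) • ∑ i, pairTerm i (i + 1) (∏ j ∈ s, X j) := by
  simp [T2op_eq_add_sum_pairTerm, X_sq_mul_pderiv_pderiv_prod_X, phi_C, Algebra.smul_def]

lemma T2op_one (a : ℝ) : T2op N a 1 = 0 := by
  simpa [pairTerm] using T2op_prod_X a (∅ : Finset (Fin N))

variable (hN : 2 ≤ N) (a : ℝ)
include hN

lemma T2op_X (i : Fin N) : T2op N a (X i) = (4 * a : ℂ) • phi N (X i) := by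
  have right_neighbour : ∑ j : Fin N, (if j + 1 = i then phi N (X i) else 0) = phi N (X i) := by
    refine (Equiv.sum_comp (Equiv.addRight (1 : Fin N)) fun j =>
      if j = i then phi N (X i) else 0).trans ?_
    simp
  have h := T2op_prod_X a {i}
  simp only [Finset.prod_singleton, pairTerm_X (ne_add_one_of_two_le hN _), map_add,
    apply_ite (phi N), map_zero, Finset.sum_add_distrib, right_neighbour, Finset.sum_ite_eq',
    Finset.mem_univ, if_true] at h
  rw [h]
  module

lemma T2op_tauErase (i : Fin N) :
    T2op N a (tauErase i) = (2 * a * N : ℂ) • phi N (tauErase i) := by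
  have h := T2op_prod_X a (Finset.univ.erase i)
  simp only [← tauErase.eq_1, pairTerm_tauErase (ne_add_one_of_two_le hN _)] at h
  simp [h, mul_smul, Nat.cast_smul_eq_nsmul]

lemma T2op_tauTop : T2op N a (tauTop N) = (2 * a * N : ℂ) • phi N (tauTop N) := by
  have h := T2op_prod_X a (Finset.univ : Finset (Fin N))
  simp only [← tauTop.eq_1, pairTerm_tauTop (ne_add_one_of_two_le hN _)] at h
  simp [h, mul_smul, Nat.cast_smul_eq_nsmul]

lemma T2op_sig_one : T2op N a (sig N 1) = (4 * a : ℂ) • phi N (sig N 1) := by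
  simp only [sig_one_eq_sum, T2op_sum, T2op_X hN, ← Finset.smul_sum, map_sum]

lemma T2op_tauSub : T2op N a (tauSub N) = (2 * a * N : ℂ) • phi N (tauSub N) := by
  change T2op N a (∑ i, tauErase i) = (2 * a * N : ℂ) • phi N (∑ i, tauErase i)
  simp only [T2op_sum, T2op_tauErase hN, ← Finset.smul_sum, map_sum]

lemma T2op_tauTop_pow (k : ℕ) :
    T2op N a (tauTop N ^ k) = (N * k * (k - 1) + 2 * a * N * k : ℂ) • phi N (tauTop N ^ k) := by
  induction k with
  | zero => simp [T2op_one]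
  | succ k ih =>
    rw [pow_succ, T2op_symm_mul a (isSymmetric_tauTop_pow k), T2op_tauTop hN, ih,
      carreDuChamp_tauTop_pow isHomogeneous_tauTop]
    simp only [Algebra.smul_def, map_add, map_sub, map_mul, map_natCast, map_ofNat, map_one,
      Nat.cast_succ]
    ring

lemma T2op_tauSub_mul_X (i : Fin N) :
    T2op N a (tauSub N * X i) = (2 + 2 * a * (N + 2) : ℂ) • phi N (tauSub N * X i)
      + (-2 : ℂ) • phi N (tauTop N) := by
  rw [T2op_symm_mul a isSymmetric_tauSub, T2op_X hN, T2op_tauSub hN, carreDuChamp_tauSub_X]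
  simp only [Algebra.smul_def, map_add, map_sub, map_mul, map_neg, map_natCast, map_ofNat]
  ring

lemma T2op_sig_one_mul_tauErase (i : Fin N) :
    T2op N a (sig N 1 * tauErase i) = (2 + 2 * a * (N + 2) : ℂ) • phi N (sig N 1 * tauErase i)
      + (-2 : ℂ) • phi N (tauTop N) := by
  rw [T2op_symm_mul a (isSymmetric_sig 1), T2op_tauErase hN, T2op_sig_one hN,
    carreDuChamp_sig_one_tauErase]
  simp only [Algebra.smul_def, map_add, map_sub, map_mul, map_neg, map_natCast, map_ofNat]
  ring

lemma T2op_sig_one_mul_tauSub :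
    T2op N a (sig N 1 * tauSub N) = (2 + 2 * a * (N + 2) : ℂ) • phi N (sig N 1 * tauSub N)
      + (-2 * N : ℂ) • phi N (tauTop N) := by
  change T2op N a (sig N 1 * ∑ i, tauErase i) = _ • phi N (sig N 1 * ∑ i, tauErase i) + _
  simp only [Finset.mul_sum, T2op_sum, T2op_sig_one_mul_tauErase hN, Finset.sum_add_distrib,
    ← Finset.smul_sum, map_sum]
  simp [mul_smul, Nat.cast_smul_eq_nsmul]

-- Conjugation by `τ_N ^ k` shifts all momenta by `k`, hence the terms `8km + 4Nk²`.
lemma Hbar2op_tauTop_pow_mul {u : MvP N} {m : ℕ} (hu : u.IsHomogeneous m) {A B : ℂ}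
    (hT : T2op N a u = A • phi N u + B • phi N (tauTop N)) (k : ℕ) :
    Hbar2op N a (tauTop N ^ k * u) =
      (4 * A + 4 * (1 - 2 * a) * m + 2 * N * a ^ 2 + 8 * k * m + 4 * N * k ^ 2 : ℂ) •
        phi N (tauTop N ^ k * u) + (4 * B) • phi N (tauTop N ^ (k + 1)) := by
  have hT' : T2op N a (tauTop N ^ k * u) =
      (A + N * k * (k - 1) + 2 * a * N * k + 2 * k * m : ℂ) • phi N (tauTop N ^ k * u)
        + B • phi N (tauTop N ^ (k + 1)) := by
    rw [T2op_symm_mul a (isSymmetric_tauTop_pow k), hT, T2op_tauTop_pow hN,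
      carreDuChamp_tauTop_pow hu]
    simp only [Algebra.smul_def, map_add, map_sub, map_mul, map_natCast, map_ofNat, map_one,
      pow_succ]
    ring
  have hJ : ∑ i, phi N (X i * pderiv i (tauTop N ^ k * u)) =
      (k * N + m : ℂ) • phi N (tauTop N ^ k * u) := by
    have hom : (tauTop N ^ k * u).IsHomogeneous (N * k + m) := (isHomogeneous_tauTop.pow k).mul hu
    rw [← map_sum, hom.sum_X_mul_pderiv, nsmul_eq_mul]
    simp only [Algebra.smul_def, map_add, map_mul, map_natCast, Nat.cast_add, Nat.cast_mul]
    ring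
  rw [Hbar2op, hT', hJ]
  simp only [phi_C, Algebra.smul_def]
  push_cast
  simp only [map_mul, map_pow, map_ofNat]
  ring

end T2

section SpinLift

variable {N d : ℕ} [NeZero N]

/-- The `Σ`-valued polynomial `∑ i, h_i p |s_i⟩` as a linear function of `p`. The generators of
`𝒯_2^n` are the cases `h = 1`, `h = X` and `h = tauErase`. -/
def spinLift (s : SpinV N d) (h : Fin N → MvP N) : MvP N →ₗ[ℂ] SpinPoly N d where
  toFun p c := ∑ i, C (sComp s i c) * (h i * p)
  map_add' p q := by
    funext c
    simp only [mul_add, Finset.sum_add_distrib, Pi.add_apply]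
  map_smul' r p := by
    funext c
    simp only [mul_smul_comm, Finset.smul_sum, Pi.smul_apply, RingHom.id_apply]

lemma spinLift_apply (s : SpinV N d) (h : Fin N → MvP N) (p : MvP N) (c : Fin N → Fin d) :
    spinLift s h p c = ∑ i, C (sComp s i c) * (h i * p) := rfl

lemma spinLift_one (s : SpinV N d) (p : MvP N) : spinLift s 1 p = fun c => C (Lam s c) * p := by
  funext c
  simp [spinLift_apply, Lam, Finset.sum_mul]

variable {n : ℕ} (s : SpinV N d)

lemma spinLift_one_mem_T2space {α β k : ℕ} (hα : α ≤ 1) (hβ : β ≤ 1)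
    (hn : α + (N - 1) * β + N * k ≤ n) :
    spinLift s 1 (tauTop N ^ k * (sig N 1 ^ α * tauSub N ^ β)) ∈ T2space N d n := by
  obtain ⟨F, hF, hdeg, htot⟩ := exists_aeval_eq_prod_pow
    (v := ![sig N 1, tauSub N, tauTop N]) (w := ![1, N - 1, N])
    (Fin.forall_fin_succ.2 ⟨isHomogeneous_sig_one, Fin.forall_fin_two.2
      ⟨isHomogeneous_tauSub, isHomogeneous_tauTop⟩⟩) ![α, β, k]
  simp only [Fin.sum_univ_three, Fin.prod_univ_three, Matrix.cons_val] at hF htot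
  refine Submodule.subset_span (.inl (.inl ⟨s, F, (hdeg 0).trans hα, (hdeg 1).trans hβ, ?_, ?_⟩))
  · exact htot.trans (by omega)
  · rw [spinLift_one, hF, mul_comm (tauTop N ^ k)]

lemma spinLift_X_mem_T2space {β k : ℕ} (hβ : β ≤ 1) (hn : (N - 1) * β + N * k + 1 ≤ n) :
    spinLift s X (tauTop N ^ k * tauSub N ^ β) ∈ T2space N d n := by
  obtain ⟨G, hG, hdeg, htot⟩ := exists_aeval_eq_prod_pow
    (v := ![tauSub N, tauTop N]) (w := ![N - 1, N])
    (Fin.forall_fin_two.2 ⟨isHomogeneous_tauSub, isHomogeneous_tauTop⟩) ![β, k]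
  simp only [Fin.sum_univ_two, Fin.prod_univ_two, Matrix.cons_val] at hG htot
  refine Submodule.subset_span (.inl (.inr ⟨s, G, (hdeg 0).trans hβ, by omega, ?_⟩))
  rw [hG, mul_comm (tauTop N ^ k)]
  rfl

lemma spinLift_tauErase_mem_T2space {α k : ℕ} (hα : α ≤ 1) (hn : α + N * k + (N - 1) ≤ n) :
    spinLift s tauErase (tauTop N ^ k * sig N 1 ^ α) ∈ T2space N d n := by
  obtain ⟨Q, hQ, hdeg, htot⟩ := exists_aeval_eq_prod_pow
    (v := ![sig N 1, tauTop N]) (w := ![1, N])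
    (Fin.forall_fin_two.2 ⟨isHomogeneous_sig_one, isHomogeneous_tauTop⟩) ![α, k]
  simp only [Fin.sum_univ_two, Fin.prod_univ_two, Matrix.cons_val] at hQ htot
  refine Submodule.subset_span (.inr ⟨s, Q, (hdeg 0).trans hα, by omega, ?_⟩)
  rw [hQ, mul_comm (tauTop N ^ k)]
  rfl

end SpinLift

section Invariance

variable {N d : ℕ} [NeZero N]

/-- The space of `Σ`-valued polynomials that `H̄_2` maps into `𝒯_2^n`, the membership being
tested inside the rational functions. The invariance of `𝒯_2^n` says that it contains `𝒯_2^n`. -/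
def Hbar2Preimage (N d : ℕ) [NeZero N] (a : ℝ) (n : ℕ) : Submodule ℂ (SpinPoly N d) :=
  ((T2space N d n).map ((phiLin N).compLeft (Fin N → Fin d))).comap
    ((Hbar2Lin N a).compLeft (Fin N → Fin d))

lemma mem_Hbar2Preimage_iff {a : ℝ} {n : ℕ} {Φ : SpinPoly N d} :
    Φ ∈ Hbar2Preimage N d a n ↔ ∃ Φ' ∈ T2space N d n, ∀ c, phi N (Φ' c) = Hbar2op N a (Φ c) :=
  exists_congr fun _ => and_congr_right fun _ => funext_iff

variable (hN : 2 ≤ N) (a : ℝ) {n : ℕ} (s : SpinV N d)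
include hN

lemma spinLift_mem_Hbar2Preimage {h : Fin N → MvP N} {u : MvP N} {m k : ℕ} {A B : ℂ}
    (hom : ∀ i, (h i * u).IsHomogeneous m)
    (hT : ∀ i, T2op N a (h i * u) = A • phi N (h i * u) + B • phi N (tauTop N))
    (hmem : spinLift s h (tauTop N ^ k * u) ∈ T2space N d n) (hB : B ≠ 0 → N * (k + 1) ≤ n) :
    spinLift s h (tauTop N ^ k * u) ∈ Hbar2Preimage N d a n := by
  have hτ : (4 * B) • spinLift s 1 (tauTop N ^ (k + 1)) ∈ T2space N d n := by
    by_cases hB0 : B = 0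
    · simp [hB0]
    · refine Submodule.smul_mem _ _ ?_
      simpa using spinLift_one_mem_T2space s zero_le_one zero_le_one (α := 0) (β := 0)
        (by simpa using hB hB0)
  obtain ⟨E, hE⟩ : ∃ E : ℂ, ∀ i, Hbar2Lin N a (tauTop N ^ k * (h i * u)) =
      E • phi N (tauTop N ^ k * (h i * u)) + (4 * B) • phi N (tauTop N ^ (k + 1)) :=
    ⟨_, fun i => Hbar2op_tauTop_pow_mul hN a (hom i) (hT i) k⟩
  refine mem_Hbar2Preimage_iff.2 ⟨_, add_mem (Submodule.smul_mem _ E hmem) hτ, fun c => ?_⟩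
  change _ = Hbar2Lin N a (∑ i, C (sComp s i c) * (h i * (tauTop N ^ k * u)))
  simp only [mul_left_comm (h _), C_mul', map_sum, map_smul, hE, Pi.add_apply, Pi.smul_apply,
    spinLift_apply, map_add, phi_smul, Pi.one_apply, one_mul, smul_add, Finset.sum_add_distrib,
    Finset.smul_sum, smul_comm (sComp s _ c)]

lemma spinLift_one_mem_Hbar2Preimage {α β k : ℕ} (hα : α ≤ 1) (hβ : β ≤ 1)
    (hn : α + (N - 1) * β + N * k ≤ n) :
    spinLift s 1 (tauTop N ^ k * (sig N 1 ^ α * tauSub N ^ β)) ∈ Hbar2Preimage N d a n := by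
  have hmem := spinLift_one_mem_T2space s hα hβ hn
  have hom : (sig N 1 ^ α * tauSub N ^ β).IsHomogeneous (1 * α + (N - 1) * β) :=
    (isHomogeneous_sig_one.pow α).mul (isHomogeneous_tauSub.pow β)
  obtain ⟨A, B, hT, hB⟩ : ∃ A B : ℂ, T2op N a (sig N 1 ^ α * tauSub N ^ β) =
      A • phi N (sig N 1 ^ α * tauSub N ^ β) + B • phi N (tauTop N) ∧
        (B ≠ 0 → N ≤ α + (N - 1) * β) := by
    interval_cases α <;> interval_cases β
    · exact ⟨0, 0, by simp [T2op_one], by simp⟩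
    · exact ⟨_, 0, by simpa using T2op_tauSub hN a, by simp⟩
    · exact ⟨_, 0, by simpa using T2op_sig_one hN a, by simp⟩
    · exact ⟨_, _, by simpa only [pow_one] using T2op_sig_one_mul_tauSub hN a, fun _ => by omega⟩
  refine spinLift_mem_Hbar2Preimage hN a s (A := A) (B := B)
    (fun _ => by rwa [Pi.one_apply, one_mul]) (fun _ => by rwa [Pi.one_apply, one_mul]) hmem ?_
  exact fun hB0 => by linarith [hB hB0]

lemma spinLift_X_mem_Hbar2Preimage {β k : ℕ} (hβ : β ≤ 1) (hn : (N - 1) * β + N * k + 1 ≤ n) :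
    spinLift s X (tauTop N ^ k * tauSub N ^ β) ∈ Hbar2Preimage N d a n := by
  have hmem := spinLift_X_mem_T2space s hβ hn
  have hom (i : Fin N) : (X i * tauSub N ^ β).IsHomogeneous (1 + (N - 1) * β) :=
    (isHomogeneous_X ℂ i).mul (isHomogeneous_tauSub.pow β)
  interval_cases β
  · exact spinLift_mem_Hbar2Preimage hN a s (B := 0) hom
      (fun i => by simpa using T2op_X hN a i) hmem (absurd rfl)
  · exact spinLift_mem_Hbar2Preimage hN a s hom
      (fun i => by simpa only [pow_one, mul_comm (X i)] using T2op_tauSub_mul_X hN a i) hmem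
      fun _ => by linarith [Nat.sub_add_cancel (NeZero.one_le (n := N))]

lemma spinLift_tauErase_mem_Hbar2Preimage {α k : ℕ} (hα : α ≤ 1)
    (hn : α + N * k + (N - 1) ≤ n) :
    spinLift s tauErase (tauTop N ^ k * sig N 1 ^ α) ∈ Hbar2Preimage N d a n := by
  have hmem := spinLift_tauErase_mem_T2space s hα hn
  have hom (i : Fin N) : (tauErase i * sig N 1 ^ α).IsHomogeneous (N - 1 + 1 * α) :=
    (isHomogeneous_tauErase i).mul (isHomogeneous_sig_one.pow α)
  interval_cases α
  · exact spinLift_mem_Hbar2Preimage hN a s (B := 0) hom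
      (fun i => by simpa using T2op_tauErase hN a i) hmem (absurd rfl)
  · exact spinLift_mem_Hbar2Preimage hN a s hom
      (fun i => by simpa only [pow_one, mul_comm (tauErase i)] using
        T2op_sig_one_mul_tauErase hN a i) hmem
      fun _ => by linarith [Nat.sub_add_cancel (NeZero.one_le (n := N))]

lemma T2genF_subset_Hbar2Preimage : T2genF N d n ⊆ Hbar2Preimage N d a n := by
  rintro _ ⟨s, F, hF0, hF1, htot, rfl⟩
  rw [← spinLift_one, SetLike.mem_coe, ← Submodule.mem_comap]
  refine aeval_mem_of_totalDegree_le (w := ![1, N - 1, N])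
    (Fin.forall_fin_succ.2 ⟨isHomogeneous_sig_one, Fin.forall_fin_two.2
      ⟨isHomogeneous_tauSub, isHomogeneous_tauTop⟩⟩) htot fun e he hn => ?_
  simp only [Fin.sum_univ_three, Fin.prod_univ_three, Matrix.cons_val, one_mul] at hn ⊢
  rw [mul_comm, Submodule.mem_comap]
  exact spinLift_one_mem_Hbar2Preimage hN a s ((he 0).trans hF0) ((he 1).trans hF1) hn

lemma T2genG_subset_Hbar2Preimage : T2genG N d n ⊆ Hbar2Preimage N d a n := by
  rintro _ ⟨s, G, hG, htot, rfl⟩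
  change spinLift s X (aeval _ G) ∈ _
  rw [SetLike.mem_coe, ← Submodule.mem_comap]
  refine aeval_mem_of_totalDegree_le (w := ![N - 1, N]) (n := n - 1)
    (Fin.forall_fin_two.2 ⟨isHomogeneous_tauSub, isHomogeneous_tauTop⟩) (by omega)
    fun e he hn => ?_
  simp only [Fin.sum_univ_two, Fin.prod_univ_two, Matrix.cons_val] at hn ⊢
  rw [mul_comm, Submodule.mem_comap]
  exact spinLift_X_mem_Hbar2Preimage hN a s ((he 0).trans hG) (by omega)

lemma T2genQ_subset_Hbar2Preimage : T2genQ N d n ⊆ Hbar2Preimage N d a n := by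
  rintro _ ⟨s, Q, hQ, htot, rfl⟩
  change spinLift s tauErase (aeval _ Q) ∈ _
  rw [SetLike.mem_coe, ← Submodule.mem_comap]
  refine aeval_mem_of_totalDegree_le (w := ![1, N]) (n := n - (N - 1))
    (Fin.forall_fin_two.2 ⟨isHomogeneous_sig_one, isHomogeneous_tauTop⟩) (by omega)
    fun e he hn => ?_
  simp only [Fin.sum_univ_two, Fin.prod_univ_two, Matrix.cons_val, one_mul] at hn ⊢
  rw [mul_comm, Submodule.mem_comap]
  exact spinLift_tauErase_mem_Hbar2Preimage hN a s ((he 0).trans hQ) (by omega)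

end Invariance

theorem stmt_9_general (N d : ℕ) [NeZero N] (hN : 2 ≤ N) (a : ℝ) (n : ℕ)
    (Φ : SpinPoly N d) (hΦ : Φ ∈ T2space N d n) :
    ∃ Φ' ∈ T2space N d n, ∀ c : Fin N → Fin d, phi N (Φ' c) = Hbar2op N a (Φ c) := by
  have hle : T2space N d n ≤ Hbar2Preimage N d a n :=
    Submodule.span_le.2 <| Set.union_subset
      (Set.union_subset (T2genF_subset_Hbar2Preimage hN a) (T2genG_subset_Hbar2Preimage hN a))
      (T2genQ_subset_Hbar2Preimage hN a)
  exact mem_Hbar2Preimage_iff.1 (hle hΦ)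

theorem stmt_9 (N d : ℕ) [NeZero N] (hN : 3 ≤ N) (hd : 1 ≤ d) (a : ℝ) (n : ℕ)
    (Φ : SpinPoly N d) (hΦ : Φ ∈ T2space N d n) :
    ∃ Φ' ∈ T2space N d n, ∀ c : Fin N → Fin d, phi N (Φ' c) = Hbar2op N a (Φ c) :=
  stmt_9_general N d (by omega) a n Φ hΦ
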